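/- Let n ≥ 2 and let f: ℂ^{n×n} → ℝ be differentiable (with respect to the real and imaginary parts of the entries) and invariant under right multiplication by diagonal unitary matrices, i.e. f(UD) = f(U) for all U ∈ U(n) and all diagonal D ∈ U(n). Then for every U ∈ U(n) there exists a pair 1 ≤ i < j ≤ n such that ‖ProjGrad h^{ij}_U(I₂)‖ ≥ (√2/n) ‖ProjGrad f(U)‖, where ProjGrad h^{ij}_U(I₂) denotes the Riemannian gradient on U(2) of the map Ψ ↦ f(U G(i,j,Ψ)) at the identity I₂. -/

import Mathlib

open Matrix BigOperators Filter

/-- Frobenius norm of a square complex matrix (any size). -/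
noncomputable def frobC {m : ℕ} (A : Matrix (Fin m) (Fin m) ℂ) : ℝ :=
  Real.sqrt (∑ i, ∑ j, Complex.normSq (A i j))

/-- `g` is the Euclidean gradient of `f : ℂ^{n×n} → ℝ` with respect to the real
inner product `⟨A,B⟩ = Re tr(Aᴴ B)`. -/
def IsGradC {n : ℕ} (f : Matrix (Fin n) (Fin n) ℂ → ℝ)
    (g : Matrix (Fin n) (Fin n) ℂ → Matrix (Fin n) (Fin n) ℂ) : Prop :=
  ∀ U H, HasDerivAt (fun t : ℝ => f (U + t • H))
    (∑ i, ∑ j, ((starRingEnd ℂ) (g U i j) * H i j).re) 0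

/-- Riemannian (projected) gradient on U(n): `U (Λ - Λᴴ)/2` with `Λ = Uᴴ ∇f(U)`. -/
noncomputable def projGradC {n : ℕ}
    (g : Matrix (Fin n) (Fin n) ℂ → Matrix (Fin n) (Fin n) ℂ)
    (U : Matrix (Fin n) (Fin n) ℂ) : Matrix (Fin n) (Fin n) ℂ :=
  U * ((1 / 2 : ℂ) • (Uᴴ * g U - (Uᴴ * g U)ᴴ))

/-- Plane transformation `G(i,j,Ψ)`: identity except that the 2×2 submatrix formed
by rows and columns `(i,j)` equals `Ψ`. -/
noncomputable def planeG (n : ℕ) (i j : Fin n) (Ψ : Matrix (Fin 2) (Fin 2) ℂ) :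
    Matrix (Fin n) (Fin n) ℂ :=
  fun a b =>
    if a = i ∧ b = i then Ψ 0 0
    else if a = i ∧ b = j then Ψ 0 1
    else if a = j ∧ b = i then Ψ 1 0
    else if a = j ∧ b = j then Ψ 1 1
    else if a = b then 1 else 0

/-!
By right invariance, `f` is constant along `t ↦ U diag(exp(i t θ))`. Its derivative there is
`∑ₖ θₖ Im Λₖₖ` with `Λ = Uᴴ ∇f(U)`, so `Λ` has a real diagonal and its skew-Hermitian part `A` has
zero diagonal. The gradient of `h^{ij}_U` at `I₂` is the `2 × 2` submatrix of `Λ` on rows and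
columns `i, j`, and its skew-Hermitian part has norm `√2 |Aᵢⱼ|`. As `‖A‖²` is the sum of
the `n (n - 1)` off-diagonal terms `|Aᵢⱼ|²`, the largest of them is at least
`‖A‖² / (n (n - 1))`.
-/

section FrobeniusInner

variable {l m n p : Type*} [Fintype l] [Fintype m] [Fintype n] [Fintype p]

/-- The real Frobenius inner product `⟨A, B⟩ = Re tr(Aᴴ B)`, written entrywise as in `IsGradC`. -/
def frobInner (A B : Matrix m n ℂ) : ℝ :=
  ∑ i, ∑ j, ((starRingEnd ℂ) (A i j) * B i j).re

lemma frobInner_eq_re_trace (A B : Matrix m n ℂ) : frobInner A B = (Aᴴ * B).trace.re := by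
  rw [frobInner, Finset.sum_comm]
  simp [trace, mul_apply]

lemma frobInner_mul_left (A : Matrix m n ℂ) (P : Matrix m l ℂ) (B : Matrix l n ℂ) :
    frobInner A (P * B) = frobInner (Pᴴ * A) B := by
  simp only [frobInner_eq_re_trace, conjTranspose_mul, conjTranspose_conjTranspose,
    Matrix.mul_assoc]

lemma frobInner_mul_right (A : Matrix m n ℂ) (B : Matrix m p ℂ) (Q : Matrix p n ℂ) :
    frobInner A (B * Q) = frobInner (A * Qᴴ) B := by
  rw [frobInner_eq_re_trace, frobInner_eq_re_trace, conjTranspose_mul, conjTranspose_conjTranspose,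
    ← Matrix.mul_assoc, trace_mul_comm, Matrix.mul_assoc]

lemma frobInner_diagonal [DecidableEq n] (A : Matrix n n ℂ) (d : n → ℂ) :
    frobInner A (diagonal d) = ∑ k, ((starRingEnd ℂ) (A k k) * d k).re := by
  simp [frobInner_eq_re_trace, trace]

lemma frobC_eq_sqrt_frobInner {n : ℕ} (A : Matrix (Fin n) (Fin n) ℂ) :
    frobC A = √(frobInner A A) := by
  simp [frobC, frobInner, Complex.normSq_apply]

lemma frobC_mul_of_conjTranspose_mul_self {n : ℕ} {U : Matrix (Fin n) (Fin n) ℂ}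
    (hU : Uᴴ * U = 1) (A : Matrix (Fin n) (Fin n) ℂ) : frobC (U * A) = frobC A := by
  rw [frobC_eq_sqrt_frobInner, frobC_eq_sqrt_frobInner, frobInner_mul_left, ← Matrix.mul_assoc,
    hU, Matrix.one_mul]

end FrobeniusInner

section SkewPart

variable {m n : Type*}

/-- The skew-Hermitian part `(A - Aᴴ) / 2`. For `A = Uᴴ ∇f(U)` it is the Riemannian gradient of `f`
at `U`, translated to the Lie algebra of the unitary group. -/
noncomputable def skewPart (A : Matrix n n ℂ) : Matrix n n ℂ :=
  (1 / 2 : ℂ) • (A - Aᴴ)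

lemma conjTranspose_skewPart (A : Matrix n n ℂ) : (skewPart A)ᴴ = -skewPart A := by
  simp [skewPart, conjTranspose_smul, ← smul_neg]

lemma skewPart_submatrix (A : Matrix n n ℂ) (e : m → n) :
    skewPart (A.submatrix e e) = (skewPart A).submatrix e e :=
  rfl

lemma skewPart_apply_self_eq_zero {A : Matrix n n ℂ} {k : n} (h : (A k k).im = 0) :
    skewPart A k k = 0 := by
  simp [skewPart, Complex.conj_eq_iff_im.2 h]

lemma normSq_apply_comm_of_conjTranspose_eq_neg {A : Matrix n n ℂ} (hA : Aᴴ = -A)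
    (i j : n) : Complex.normSq (A i j) = Complex.normSq (A j i) := by
  have h : (starRingEnd ℂ) (A j i) = -A i j := congr_fun₂ hA i j
  rw [← Complex.normSq_neg, ← h, Complex.normSq_conj]

end SkewPart

section LargestPair

lemma exists_lt_sum_le_nsmul {ι R : Type*} [Fintype ι] [Nontrivial ι] [LinearOrder ι]
    [AddCommMonoid R] [LinearOrder R] [IsOrderedAddMonoid R] {w : ι → ι → R}
    (hdiag : ∀ i, w i i = 0) (hsymm : ∀ i j, w i j = w j i) :
    ∃ i j, i < j ∧
      ∑ a, ∑ b, w a b ≤ (Fintype.card ι * (Fintype.card ι - 1)) • w i j := by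
  obtain ⟨a, b, hab⟩ := exists_pair_ne ι
  obtain ⟨⟨i, j⟩, hij, hmax⟩ := Finset.univ.offDiag.exists_max_image (fun p : ι × ι => w p.1 p.2)
    ⟨(a, b), by simpa using hab⟩
  have hle : ∑ a, ∑ b, w a b ≤ (Fintype.card ι * (Fintype.card ι - 1)) • w i j :=
    calc ∑ a, ∑ b, w a b = ∑ p ∈ Finset.univ.offDiag, w p.1 p.2 := by
          rw [← Finset.sum_product', ← Finset.diag_union_offDiag,
            Finset.sum_union (Finset.disjoint_diag_offDiag _), Finset.sum_diag]
          simp [hdiag]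
      _ ≤ Finset.univ.offDiag.card • w i j := Finset.sum_le_card_nsmul _ _ _ hmax
      _ = (Fintype.card ι * (Fintype.card ι - 1)) • w i j := by
          rw [Finset.offDiag_card, Finset.card_univ, Nat.mul_sub_one]
  rcases lt_or_gt_of_ne (Finset.mem_offDiag.1 hij).2.2 with hlt | hgt
  · exact ⟨i, j, hlt, hle⟩
  · exact ⟨j, i, hgt, hsymm i j ▸ hle⟩

variable {n : ℕ} {A : Matrix (Fin n) (Fin n) ℂ}

lemma frobC_submatrix_pair (hA : Aᴴ = -A) (hdiag : ∀ k, A k k = 0) (i j : Fin n) :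
    frobC (A.submatrix ![i, j] ![i, j]) = √(2 * Complex.normSq (A i j)) := by
  simp [frobC, Fin.sum_univ_two, hdiag, normSq_apply_comm_of_conjTranspose_eq_neg hA j i, two_mul]

lemma exists_lt_frobC_le_frobC_submatrix_pair (hn : 2 ≤ n) (hA : Aᴴ = -A)
    (hdiag : ∀ k, A k k = 0) :
    ∃ i j, i < j ∧
      √(2 / (n * (n - 1))) * frobC A ≤ frobC (A.submatrix ![i, j] ![i, j]) := by
  have : Nontrivial (Fin n) := Fin.nontrivial_iff_two_le.2 hn
  obtain ⟨i, j, hij, hle⟩ := exists_lt_sum_le_nsmul (w := fun a b => Complex.normSq (A a b))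
    (by simp [hdiag]) (normSq_apply_comm_of_conjTranspose_eq_neg hA)
  rw [Fintype.card_fin, nsmul_eq_mul, Nat.cast_mul, Nat.cast_pred (by lia)] at hle
  have hn' : (1 : ℝ) < n := by exact_mod_cast hn
  have hpos : (0 : ℝ) < n * (n - 1) := mul_pos (by linarith) (sub_pos.2 hn')
  refine ⟨i, j, hij, ?_⟩
  rw [frobC_submatrix_pair hA hdiag, frobC, ← Real.sqrt_mul (by positivity)]
  refine Real.sqrt_le_sqrt ?_
  calc 2 / (n * (n - 1)) * ∑ a, ∑ b, Complex.normSq (A a b)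
      ≤ 2 / (n * (n - 1)) * (n * (n - 1) * Complex.normSq (A i j)) := by gcongr
    _ = 2 * Complex.normSq (A i j) := by rw [← mul_assoc, div_mul_cancel₀ _ hpos.ne']

end LargestPair

section PlaneTransformation

/-- The `ι × 2` matrix with columns `eᵢ` and `eⱼ`, which includes the coordinate plane
`(i, j)` into `ℂ^ι`. -/
def planeInclusion {ι : Type*} [DecidableEq ι] (i j : ι) : Matrix ι (Fin 2) ℂ :=
  (1 : Matrix ι ι ℂ).submatrix id ![i, j]

lemma conjTranspose_planeInclusion_mul_mul_planeInclusion {ι : Type*} [Fintype ι] [DecidableEq ι]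
    (A : Matrix ι ι ℂ) (i j : ι) :
    (planeInclusion i j)ᴴ * A * planeInclusion i j = A.submatrix ![i, j] ![i, j] := by
  ext a b
  simp only [planeInclusion, mul_apply, conjTranspose_apply, submatrix_apply, one_apply]
  simp

lemma planeG_eq_one_add {n : ℕ} {i j : Fin n} (hij : i ≠ j) (Ψ : Matrix (Fin 2) (Fin 2) ℂ) :
    planeG n i j Ψ = 1 + planeInclusion i j * (Ψ - 1) * (planeInclusion i j)ᴴ := by
  ext a b
  simp only [planeG, planeInclusion, Matrix.add_apply, mul_apply, Fin.sum_univ_two, one_apply,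
    conjTranspose_apply, submatrix_apply, Matrix.sub_apply]
  by_cases hai : a = i <;> by_cases haj : a = j <;> by_cases hbi : b = i <;>
    by_cases hbj : b = j <;> simp_all

lemma hasDerivAt_comp_planeG {n : ℕ} {f : Matrix (Fin n) (Fin n) ℂ → ℝ}
    {U G : Matrix (Fin n) (Fin n) ℂ} (hG : ∀ H, HasLineDerivAt ℝ f (frobInner G H) U H)
    {i j : Fin n} (hij : i ≠ j) (H : Matrix (Fin 2) (Fin 2) ℂ) :
    HasDerivAt (fun t : ℝ => f (U * planeG n i j (1 + t • H)))
      (frobInner ((Uᴴ * G).submatrix ![i, j] ![i, j]) H) 0 := by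
  have hcurve (t : ℝ) : U * planeG n i j (1 + t • H) =
      U + t • (U * (planeInclusion i j * H * (planeInclusion i j)ᴴ)) := by
    simp [planeG_eq_one_add hij, Matrix.mul_add]
  have hinner : frobInner G (U * (planeInclusion i j * H * (planeInclusion i j)ᴴ)) =
      frobInner ((Uᴴ * G).submatrix ![i, j] ![i, j]) H := by
    rw [frobInner_mul_left, frobInner_mul_right, conjTranspose_conjTranspose, frobInner_mul_left,
      ← Matrix.mul_assoc, conjTranspose_planeInclusion_mul_mul_planeInclusion]
  simp only [hcurve, ← hinner]
  exact hG _

end PlaneTransformation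

section DiagonalInvariance

lemma hasDerivAt_comp_matrix_curve {m n E F : Type*} [Finite m] [Finite n]
    [NormedAddCommGroup E] [NormedSpace ℝ E] [NormedAddCommGroup F] [NormedSpace ℝ F]
    {f : Matrix m n E → F} {γ : ℝ → Matrix m n E} {H : Matrix m n E} {f' : F} {t₀ : ℝ}
    (hf : DifferentiableAt ℝ (fun x : m → n → E => f (of x)) (of.symm (γ t₀)))
    (hline : HasLineDerivAt ℝ f f' (γ t₀) H)
    (hγ : ∀ a b, HasDerivAt (fun t => γ t a b) (H a b) t₀) :
    HasDerivAt (fun t => f (γ t)) f' t₀ := by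
  cases nonempty_fintype m
  cases nonempty_fintype n
  have hf' := hf.hasFDerivAt
  have hcurve : HasDerivAt (fun t => of.symm (γ t)) (of.symm H) t₀ :=
    hasDerivAt_pi.2 fun a => hasDerivAt_pi.2 fun b => hγ a b
  have hcomp := hf'.comp_hasDerivAt t₀ hcurve
  rwa [(hf'.hasLineDerivAt (of.symm H)).unique hline] at hcomp

variable {n : Type*} [Fintype n] [DecidableEq n]

lemma conjTranspose_mul_self_diagonal_exp (θ : n → ℝ) :
    (diagonal fun k => Complex.exp (θ k * Complex.I))ᴴ *
      diagonal (fun k => Complex.exp (θ k * Complex.I)) = 1 := by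
  simp [diagonal_conjTranspose, Complex.conj_mul', Complex.norm_exp_ofReal_mul_I]

lemma im_diag_eq_zero_of_diagonal_invariant {f : Matrix n n ℂ → ℝ} {U G : Matrix n n ℂ}
    (hdiff : DifferentiableAt ℝ (fun x : n → n → ℂ => f (of x)) (of.symm U))
    (hG : ∀ H, HasLineDerivAt ℝ f (frobInner G H) U H)
    (hinv : ∀ D : Matrix n n ℂ, Dᴴ * D = 1 → D.IsDiag → f (U * D) = f U) (k : n) :
    ((Uᴴ * G) k k).im = 0 := by
  let θ : n → ℝ := Pi.single k 1
  let γ : ℝ → Matrix n n ℂ :=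
    fun t => U * diagonal fun l => Complex.exp ((t * θ l : ℝ) * Complex.I)
  let K : Matrix n n ℂ := diagonal fun l => θ l * Complex.I
  have hγ₀ : γ 0 = U := by simp [γ]
  have hγ (a b : n) : HasDerivAt (fun t => γ t a b) ((U * K) a b) 0 := by
    have hphase :
        HasDerivAt (fun t : ℝ => ((t * θ b : ℝ) : ℂ) * Complex.I) (θ b * Complex.I) 0 := by
      simpa using ((hasDerivAt_id (0 : ℝ)).mul_const (θ b)).ofReal_comp.mul_const Complex.I
    simpa [γ, K, mul_diagonal] using hphase.cexp.const_mul (U a b)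
  have hderiv : HasDerivAt (fun t => f (γ t)) (frobInner G (U * K)) 0 :=
    hasDerivAt_comp_matrix_curve (by rwa [hγ₀]) (by rw [hγ₀]; exact hG _) hγ
  have hconst : (fun t => f (γ t)) = fun _ => f U := funext fun t =>
    hinv _ (conjTranspose_mul_self_diagonal_exp _) (isDiag_diagonal _)
  rw [hconst] at hderiv
  have hzero : frobInner G (U * K) = 0 := hderiv.unique (hasDerivAt_const _ _)
  simpa [frobInner_mul_left, frobInner_diagonal, K, θ, Pi.single_apply] using hzero

end DiagonalInvariance

lemma sqrt_two_div_le_sqrt_two_div_mul_pred {x : ℝ} (hx : 1 < x) :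
    √2 / x ≤ √(2 / (x * (x - 1))) := by
  have : 0 < x * (x - 1) := mul_pos (zero_lt_one.trans hx) (sub_pos.2 hx)
  calc √2 / x = √(2 / x ^ 2) := by
        rw [Real.sqrt_div zero_le_two, Real.sqrt_sq (zero_le_one.trans hx.le)]
    _ ≤ √(2 / (x * (x - 1))) := by
        gcongr
        linarith

theorem exists_pair_gradient_aligned_unitary_general {n : ℕ} (hn : 2 ≤ n)
    (f : Matrix (Fin n) (Fin n) ℂ → ℝ) (U G : Matrix (Fin n) (Fin n) ℂ)
    (hdiff : DifferentiableAt ℝ (fun x : Fin n → Fin n → ℂ => f (of x)) (of.symm U))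
    (hG : ∀ H, HasLineDerivAt ℝ f (frobInner G H) U H)
    (hinv : ∀ D : Matrix (Fin n) (Fin n) ℂ, Dᴴ * D = 1 → D.IsDiag → f (U * D) = f U)
    (hU : Uᴴ * U = 1) :
    ∃ i j : Fin n, i < j ∧ ∃ gh : Matrix (Fin 2) (Fin 2) ℂ,
      (∀ H : Matrix (Fin 2) (Fin 2) ℂ,
        HasDerivAt (fun t : ℝ => f (U * planeG n i j (1 + t • H))) (frobInner gh H) 0) ∧
      √(2 / (n * (n - 1))) * frobC (U * skewPart (Uᴴ * G)) ≤ frobC (skewPart gh) := by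
  have hdiag (k : Fin n) : skewPart (Uᴴ * G) k k = 0 :=
    skewPart_apply_self_eq_zero (im_diag_eq_zero_of_diagonal_invariant hdiff hG hinv k)
  obtain ⟨i, j, hij, hle⟩ :=
    exists_lt_frobC_le_frobC_submatrix_pair hn (conjTranspose_skewPart (Uᴴ * G)) hdiag
  refine ⟨i, j, hij, (Uᴴ * G).submatrix ![i, j] ![i, j], hasDerivAt_comp_planeG hG hij.ne, ?_⟩
  rwa [frobC_mul_of_conjTranspose_mul_self hU, skewPart_submatrix]

/-- For `n ≥ 2`, `f : ℂ^{n×n} → ℝ` differentiable (in the real and imaginary parts)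
and invariant under right multiplication by diagonal unitary matrices, and any
unitary `U`, there is a pair `i < j` such that the Riemannian gradient at `I₂` of
`Ψ ↦ f(U G(i,j,Ψ))` has norm at least `(√2/n) ‖ProjGrad f(U)‖`. The Euclidean
gradient `gh` of this restricted map at `I₂` is characterized by directional
derivatives, and its Riemannian gradient at `I₂` is `(gh - ghᴴ)/2`. -/
theorem exists_pair_gradient_aligned_unitary {n : ℕ} (hn : 2 ≤ n)
    (f : Matrix (Fin n) (Fin n) ℂ → ℝ)
    (g : Matrix (Fin n) (Fin n) ℂ → Matrix (Fin n) (Fin n) ℂ)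
    (hdiff : Differentiable ℝ (fun x : Fin n → Fin n → ℂ => f (Matrix.of x)))
    (hg : IsGradC f g)
    (hinv : ∀ U D : Matrix (Fin n) (Fin n) ℂ, Uᴴ * U = 1 → Dᴴ * D = 1 → D.IsDiag →
      f (U * D) = f U)
    (U : Matrix (Fin n) (Fin n) ℂ) (hU : Uᴴ * U = 1) :
    ∃ i j : Fin n, i < j ∧ ∃ gh : Matrix (Fin 2) (Fin 2) ℂ,
      (∀ H : Matrix (Fin 2) (Fin 2) ℂ,
        HasDerivAt (fun t : ℝ => f (U * planeG n i j (1 + t • H)))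
          (∑ a, ∑ b, ((starRingEnd ℂ) (gh a b) * H a b).re) 0) ∧
      Real.sqrt 2 / (n : ℝ) * frobC (projGradC g U) ≤
        frobC ((1 / 2 : ℂ) • (gh - ghᴴ)) := by
  obtain ⟨i, j, hij, gh, hgh, hle⟩ := exists_pair_gradient_aligned_unitary_general hn f U (g U)
    (hdiff U) (hg U) (fun D => hinv U D hU) hU
  exact ⟨i, j, hij, gh, hgh, (mul_le_mul_of_nonneg_right
    (sqrt_two_div_le_sqrt_two_div_mul_pred (by exact_mod_cast hn)) (Real.sqrt_nonneg _)).trans hle⟩
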